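/- arXiv:2210.05142 — 3 statements merged into one kernel-verified Lean document; each statement's English description precedes it below -/
import Mathlib

section
/- Let f_s : ℤ × ℝⁿ → ℝⁿ be continuously differentiable in its second argument, H ∈ ℝ^{n×n} symmetric positive definite, and γ ∈ (0,1) such that (∂f_s/∂s)(t,s)ᵀ H² (∂f_s/∂s)(t,s) ⪯ γ H² for all s, t. Let s : ℤ → ℝⁿ satisfy s[t+1] = f_s(t, s[t]) for all t ≥ t⁰, and let B ∈ ℝ satisfy ‖H f_s(τ, 0)‖ ≤ B for all τ ≥ t⁰. Then for all t ≥ t⁰: ‖H s[t]‖ ≤ γ^{(t−t⁰)/2} ‖H s[t⁰]‖ + B/(1 − √γ). -/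
/-!
In the weighted norm `v ↦ ‖H v‖` the Jacobian condition `Jᵀ H² J ⪯ γ H²` says exactly that
`‖H J v‖ ≤ √γ ‖H v‖` (`norm_jacobian_le`). By the mean value inequality along the segment from
`0` to `y`, each map `fₛ(t, ·)` then satisfies `‖H fₛ(t, y) - H fₛ(t, 0)‖ ≤ √γ ‖H y‖`
(`norm_image_sub_le`). Hence `‖H s[t+1]‖ ≤ √γ ‖H s[t]‖ + B`, and the claim follows by induction
because `B / (1 - √γ)` is the fixed point of `x ↦ √γ x + B`.
-/

open scoped Matrix

lemma norm_sq_toEuclideanCLM {n : ℕ} (A : Matrix (Fin n) (Fin n) ℝ)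
    (v : EuclideanSpace ℝ (Fin n)) :
    ‖Matrix.toEuclideanCLM (𝕜 := ℝ) A v‖ ^ 2 = v.ofLp ⬝ᵥ ((Aᵀ * A) *ᵥ v.ofLp) := by
  rw [EuclideanSpace.real_norm_sq_eq, ← Matrix.mulVec_mulVec, Matrix.dotProduct_mulVec,
    Matrix.vecMul_transpose]
  simp [dotProduct, sq]

/-- The matrix inequality `Jᵀ H² J ⪯ γ H²` as a bound on `J` in the norm `v ↦ ‖H v‖`. -/
lemma norm_jacobian_le {n : ℕ} {H J : Matrix (Fin n) (Fin n) ℝ} (hHsymm : H.IsSymm)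
    {γ : ℝ} (hγ : 0 ≤ γ) (h : (γ • (H * H) - Jᵀ * (H * H) * J).PosSemidef)
    (v : EuclideanSpace ℝ (Fin n)) :
    ‖Matrix.toEuclideanCLM (𝕜 := ℝ) H (Matrix.toEuclideanCLM (𝕜 := ℝ) J v)‖
      ≤ √γ * ‖Matrix.toEuclideanCLM (𝕜 := ℝ) H v‖ := by
  have hmul : Matrix.toEuclideanCLM (𝕜 := ℝ) H (Matrix.toEuclideanCLM (𝕜 := ℝ) J v)
      = Matrix.toEuclideanCLM (𝕜 := ℝ) (H * J) v := by
    rw [map_mul]; rfl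
  have hv := h.dotProduct_mulVec_nonneg v.ofLp
  rw [star_trivial, Matrix.sub_mulVec, dotProduct_sub, Matrix.smul_mulVec, dotProduct_smul,
    smul_eq_mul] at hv
  rw [hmul]
  refine (pow_le_pow_iff_left₀ (norm_nonneg _) (by positivity) two_ne_zero).1 ?_
  rw [mul_pow, Real.sq_sqrt hγ, norm_sq_toEuclideanCLM, norm_sq_toEuclideanCLM,
    Matrix.transpose_mul, hHsymm.eq, Matrix.mul_assoc Jᵀ, ← Matrix.mul_assoc H H J,
    ← Matrix.mul_assoc Jᵀ]
  linarith

/-- Mean value inequality on the segment `[0, y]` in the norm `v ↦ ‖H v‖`. -/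
lemma norm_image_sub_le {n : ℕ}
    {f : EuclideanSpace ℝ (Fin n) → EuclideanSpace ℝ (Fin n)}
    {H : Matrix (Fin n) (Fin n) ℝ} (hHsymm : H.IsSymm) {γ : ℝ} (hγ : 0 ≤ γ)
    {J : EuclideanSpace ℝ (Fin n) → Matrix (Fin n) (Fin n) ℝ}
    (hJ : ∀ y, HasFDerivAt f (Matrix.toEuclideanCLM (𝕜 := ℝ) (J y)) y)
    (hcontr : ∀ y, (γ • (H * H) - (J y)ᵀ * (H * H) * (J y)).PosSemidef)
    (y : EuclideanSpace ℝ (Fin n)) :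
    ‖Matrix.toEuclideanCLM (𝕜 := ℝ) H (f y) - Matrix.toEuclideanCLM (𝕜 := ℝ) H (f 0)‖
      ≤ √γ * ‖Matrix.toEuclideanCLM (𝕜 := ℝ) H y‖ := by
  have hderiv : ∀ r : ℝ, HasDerivAt (fun r : ℝ => Matrix.toEuclideanCLM (𝕜 := ℝ) H (f (r • y)))
      (Matrix.toEuclideanCLM (𝕜 := ℝ) H (Matrix.toEuclideanCLM (𝕜 := ℝ) (J (r • y)) y)) r := by
    intro r
    have hline : HasDerivAt (fun r : ℝ => r • y) y r := by
      simpa using (hasDerivAt_id r).smul_const y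
    exact (Matrix.toEuclideanCLM (𝕜 := ℝ) H).hasFDerivAt.comp_hasDerivAt r
      ((hJ (r • y)).comp_hasDerivAt r hline)
  have hmv := norm_image_sub_le_of_norm_deriv_le_segment_01'
    (fun r _ => (hderiv r).hasDerivWithinAt)
    (fun r _ => norm_jacobian_le hHsymm hγ (hcontr (r • y)) y)
  simpa using hmv

/-- **Lemma 5, first part (bound on solutions of the blended dynamics).**
If the Jacobian of `fₛ(t,·)` satisfies `Jᵀ H² J ⪯ γ H²` everywhere, `s` solves
`s[t+1] = fₛ(t, s[t])` for `t ≥ t⁰`, and `‖H fₛ(τ, 0)‖ ≤ B` for all `τ ≥ t⁰`, then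
`‖H s[t]‖ ≤ (√γ)^{t−t⁰} ‖H s[t⁰]‖ + B/(1−√γ)` for all `t ≥ t⁰`. -/
theorem stmt6 {n : ℕ}
    (fs : ℤ → EuclideanSpace ℝ (Fin n) → EuclideanSpace ℝ (Fin n))
    (hfs : ∀ t, ContDiff ℝ 1 (fs t))
    (H : Matrix (Fin n) (Fin n) ℝ) (hH : H.PosDef) (hHsymm : H.IsSymm)
    (γ : ℝ) (hγ : γ ∈ Set.Ioo (0 : ℝ) 1)
    (J : ℤ → EuclideanSpace ℝ (Fin n) → Matrix (Fin n) (Fin n) ℝ)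
    (hJ : ∀ (t : ℤ) (y : EuclideanSpace ℝ (Fin n)),
      HasFDerivAt (fs t) (Matrix.toEuclideanCLM (𝕜 := ℝ) (J t y)) y)
    (hcontr : ∀ (t : ℤ) (y : EuclideanSpace ℝ (Fin n)),
      (γ • (H * H) - (J t y)ᵀ * (H * H) * (J t y)).PosSemidef)
    (t0 : ℤ) (s : ℤ → EuclideanSpace ℝ (Fin n))
    (hs : ∀ t : ℤ, t0 ≤ t → s (t + 1) = fs t (s t))
    (B : ℝ)
    (hB : ∀ τ : ℤ, t0 ≤ τ → ‖Matrix.toEuclideanCLM (𝕜 := ℝ) H (fs τ 0)‖ ≤ B) :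
    ∀ t : ℤ, t0 ≤ t →
      ‖Matrix.toEuclideanCLM (𝕜 := ℝ) H (s t)‖
        ≤ Real.sqrt γ ^ (t - t0).toNat * ‖Matrix.toEuclideanCLM (𝕜 := ℝ) H (s t0)‖
          + B / (1 - Real.sqrt γ) := by
  obtain ⟨hγ0, hγ1⟩ := hγ
  have hlt : √γ < 1 := by
    rw [Real.sqrt_lt' one_pos]; simpa using hγ1
  have hB0 : 0 ≤ B := (norm_nonneg _).trans (hB t0 le_rfl)
  intro t ht
  induction t, ht using Int.leInduction with
  | base =>
    have : 0 ≤ B / (1 - √γ) := div_nonneg hB0 (by linarith)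
    simpa using this
  | succ t ht ih =>
    have hstep : ‖Matrix.toEuclideanCLM (𝕜 := ℝ) H (s (t + 1))‖
        ≤ √γ * ‖Matrix.toEuclideanCLM (𝕜 := ℝ) H (s t)‖ + B := by
      rw [hs t ht]
      have h1 := norm_image_sub_le hHsymm hγ0.le (hJ t) (hcontr t) (s t)
      have h2 := norm_sub_norm_le (Matrix.toEuclideanCLM (𝕜 := ℝ) H (fs t (s t)))
        (Matrix.toEuclideanCLM (𝕜 := ℝ) H (fs t 0))
      linarith [hB t ht]
    have hexp : (t + 1 - t0).toNat = (t - t0).toNat + 1 := by omega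
    have hfix : √γ * (B / (1 - √γ)) + B = B / (1 - √γ) := by
      have : 1 - √γ ≠ 0 := by linarith
      field_simp
      ring
    have hmul := mul_le_mul_of_nonneg_left ih (Real.sqrt_nonneg γ)
    rw [hexp, pow_succ]
    linarith
end

section
/- Let f_i : ℤ × ℝⁿ → ℝⁿ (i = 1,…,N) be continuously differentiable maps with ‖f_i(t,x)‖ ≤ M(‖x‖) for all i, t, x, where M : ℝ → ℝ is nondecreasing and continuous. Let p, q ∈ ℝ^N be positive vectors and define f_s(t,s) := Σ_{i=1}^N q_i f_i(t, p_i s). Suppose there exist a symmetric positive definite H ∈ ℝ^{n×n} and γ ∈ (0,1) with (∂f_s/∂s)(t,s)ᵀ H² (∂f_s/∂s)(t,s) ⪯ γ H² for all s, t. Then every solution of s[t+1] = f_s(t, s[t]) satisfies limsup_{t→∞} ‖s[t]‖ ≤ √N ‖q‖ ‖H⁻¹‖ ‖H‖ M(0) / (1 − √γ). -/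
open scoped Matrix

/-!
In the weighted norm `z ↦ ‖H z‖`, the matrix inequality says that the derivative of the blended map
`F t z = ∑ i, q i • f i t (p i • z)` has norm at most `√γ` (`norm_mul_le_of_contr`), so by the mean
value inequality each `F t` is a `√γ`-contraction (`contraction_of_fderiv`). Comparing `F t (s t)`
with `F t 0`, whose norm is at most `(∑ i, q i) M(0) ≤ √N ‖q‖ M(0)` by Cauchy–Schwarz, yields the
scalar recursion `‖H s[t+1]‖ ≤ √γ ‖H s[t]‖ + ‖H‖ √N ‖q‖ M(0)`. Its solutions are bounded by a
geometrically decaying term plus the fixed point (`recursion_bound`), and `‖s‖ ≤ ‖H⁻¹‖ ‖H s‖`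
gives the ultimate bound.
-/

/-- The matrix inequality `Jᵀ H² J ⪯ γ H²`, read as a bound in the norm `z ↦ ‖H z‖`. -/
lemma norm_mul_le_of_contr {n : ℕ} (H J : Matrix (Fin n) (Fin n) ℝ) (hHsymm : H.IsSymm)
    (γ : ℝ) (hγ : 0 ≤ γ)
    (h : (γ • (H * H) - Jᵀ * (H * H) * J).PosSemidef) (w : EuclideanSpace ℝ (Fin n)) :
    ‖Matrix.toEuclideanCLM (𝕜 := ℝ) H (Matrix.toEuclideanCLM (𝕜 := ℝ) J w)‖
      ≤ Real.sqrt γ * ‖Matrix.toEuclideanCLM (𝕜 := ℝ) H w‖ := by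
  have hn : ∀ A : Matrix (Fin n) (Fin n) ℝ, ‖Matrix.toEuclideanCLM (𝕜 := ℝ) A w‖ ^ 2
      = w.ofLp ⬝ᵥ ((Aᵀ * A) *ᵥ w.ofLp) := by
    intro A
    rw [EuclideanSpace.norm_sq_eq, ← Matrix.mulVec_mulVec, Matrix.dotProduct_mulVec,
      Matrix.vecMul_transpose]
    simp [dotProduct, sq]
  have h1 := hn (H * J)
  have h2 := hn H
  have h3 := h.dotProduct_mulVec_nonneg w.ofLp
  rw [map_mul, Matrix.transpose_mul, hHsymm.eq] at h1
  rw [hHsymm.eq] at h2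
  rw [Matrix.sub_mulVec, Matrix.smul_mulVec, dotProduct_sub, dotProduct_smul, star_trivial,
    smul_eq_mul, ← h2, show Jᵀ * (H * H) * J = Jᵀ * H * (H * J) by simp only [Matrix.mul_assoc],
    ← h1] at h3
  have h4 : ‖Matrix.toEuclideanCLM (𝕜 := ℝ) H (Matrix.toEuclideanCLM (𝕜 := ℝ) J w)‖ ^ 2
      ≤ γ * ‖Matrix.toEuclideanCLM (𝕜 := ℝ) H w‖ ^ 2 := by
    have h5 : (Matrix.toEuclideanCLM (𝕜 := ℝ) H * Matrix.toEuclideanCLM (𝕜 := ℝ) J) w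
      = Matrix.toEuclideanCLM (𝕜 := ℝ) H (Matrix.toEuclideanCLM (𝕜 := ℝ) J w) := rfl
    rw [h5] at h3
    linarith
  refine le_of_sq_le_sq ?_ (by positivity)
  rw [mul_pow, Real.sq_sqrt hγ]
  exact h4

/-- Mean value inequality in the norm `z ↦ ‖h z‖`, applied through the conjugated map
`h ∘ F ∘ g` with `g` the inverse of `h`. -/
lemma contraction_of_fderiv {E : Type*} [NormedAddCommGroup E] [NormedSpace ℝ E]
    (h g : E →L[ℝ] E) (hg : ∀ x, h (g x) = x) (gh : ∀ x, g (h x) = x)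
    (F : E → E) (F' : E → E →L[ℝ] E) (hF : ∀ y, HasFDerivAt F (F' y) y)
    (r : ℝ) (hr : 0 ≤ r) (hb : ∀ y w, ‖h (F' y w)‖ ≤ r * ‖h w‖) (x y : E) :
    ‖h (F x) - h (F y)‖ ≤ r * ‖h x - h y‖ := by
  have hd : ∀ z ∈ (Set.univ : Set E), HasFDerivWithinAt (fun z => h (F (g z)))
      (h ∘L (F' (g z)) ∘L g) Set.univ z := fun z _ =>
    (h.hasFDerivAt.comp z ((hF (g z)).comp z g.hasFDerivAt)).hasFDerivWithinAt
  have key := convex_univ.norm_image_sub_le_of_norm_hasFDerivWithin_le (C := r) hd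
    (fun z _ => ContinuousLinearMap.opNorm_le_bound _ hr fun w => by
      simpa [hg] using hb (g z) (g w)) (Set.mem_univ (h y)) (Set.mem_univ (h x))
  simpa [gh] using key

lemma recursion_bound (a : ℤ → ℝ) (r C : ℝ) (hr : 0 ≤ r) (hr1 : r < 1)
    (h : ∀ t, a (t + 1) ≤ r * a t + C) (k : ℕ) :
    a k ≤ r ^ k * (a 0 - C / (1 - r)) + C / (1 - r) := by
  have h1 : (1 - r) ≠ 0 := by linarith
  induction k with
  | zero => simp
  | succ k ih =>
    have h2 := h k
    have h3 := mul_le_mul_of_nonneg_left ih hr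
    -- `C / (1 - r)` is the fixed point of the recursion
    have h4 : r * (C / (1 - r)) + C = C / (1 - r) := by field_simp; ring
    push_cast
    rw [pow_succ]
    linarith

/-- **Lemma 5, second part (ultimate bound for the blended dynamics).**
Under uniform boundedness `‖fᵢ(t,x)‖ ≤ M(‖x‖)` and contractivity of the blended
dynamics `fₛ(t,s) = Σᵢ qᵢ fᵢ(t, pᵢ s)`, every solution of `s[t+1] = fₛ(t, s[t])`
satisfies `limsup_{t→∞} ‖s[t]‖ ≤ √N ‖q‖ ‖H⁻¹‖ ‖H‖ M(0) / (1 − √γ)`. -/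
theorem stmt7 {N n : ℕ} (hN : 1 ≤ N)
    (f : Fin N → ℤ → EuclideanSpace ℝ (Fin n) → EuclideanSpace ℝ (Fin n))
    (hf : ∀ i t, ContDiff ℝ 1 (f i t))
    (M : ℝ → ℝ) (hM : Monotone M) (hMcont : Continuous M)
    (hfb : ∀ (i : Fin N) (t : ℤ) (x : EuclideanSpace ℝ (Fin n)), ‖f i t x‖ ≤ M ‖x‖)
    (p q : Fin N → ℝ) (hp : ∀ i, 0 < p i) (hq : ∀ i, 0 < q i)
    (H : Matrix (Fin n) (Fin n) ℝ) (hH : H.PosDef) (hHsymm : H.IsSymm)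
    (γ : ℝ) (hγ : γ ∈ Set.Ioo (0 : ℝ) 1)
    (J : ℤ → EuclideanSpace ℝ (Fin n) → Matrix (Fin n) (Fin n) ℝ)
    (hJ : ∀ (t : ℤ) (y : EuclideanSpace ℝ (Fin n)),
      HasFDerivAt (fun z => ∑ i, q i • f i t (p i • z))
        (Matrix.toEuclideanCLM (𝕜 := ℝ) (J t y)) y)
    (hcontr : ∀ (t : ℤ) (y : EuclideanSpace ℝ (Fin n)),
      (γ • (H * H) - (J t y)ᵀ * (H * H) * (J t y)).PosSemidef)
    (s : ℤ → EuclideanSpace ℝ (Fin n))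
    (hs : ∀ t : ℤ, s (t + 1) = ∑ i, q i • f i t (p i • s t)) :
    Filter.limsup (fun t : ℤ => ‖s t‖) Filter.atTop
      ≤ Real.sqrt N * Real.sqrt (∑ i, q i ^ 2)
          * ‖Matrix.toEuclideanCLM (𝕜 := ℝ) (H⁻¹)‖
          * ‖Matrix.toEuclideanCLM (𝕜 := ℝ) H‖ * M 0 / (1 - Real.sqrt γ) := by
  have hr : 0 ≤ Real.sqrt γ := Real.sqrt_nonneg γ
  have hr1 : Real.sqrt γ < 1 := by
    rw [Real.sqrt_lt' one_pos]; simpa using hγ.2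
  have hdet : IsUnit H.det := (Matrix.isUnit_iff_isUnit_det H).1 hH.isUnit
  set h := Matrix.toEuclideanCLM (𝕜 := ℝ) H with hh
  set g := Matrix.toEuclideanCLM (𝕜 := ℝ) H⁻¹ with hgdef
  have hg : ∀ x, h (g x) = x := fun x => by
    have h0 : h * g = 1 := by rw [hh, hgdef, ← map_mul, Matrix.mul_nonsing_inv _ hdet, map_one]
    exact congrArg (fun T : EuclideanSpace ℝ (Fin n) →L[ℝ] EuclideanSpace ℝ (Fin n) => T x) h0
  have gh : ∀ x, g (h x) = x := fun x => by
    have h0 : g * h = 1 := by rw [hh, hgdef, ← map_mul, Matrix.nonsing_inv_mul _ hdet, map_one]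
    exact congrArg (fun T : EuclideanSpace ℝ (Fin n) →L[ℝ] EuclideanSpace ℝ (Fin n) => T x) h0
  have hM0 : 0 ≤ M 0 := by
    simpa using (norm_nonneg _).trans (hfb ⟨0, hN⟩ 0 0)
  have hsum : ∑ i, q i ≤ Real.sqrt N * Real.sqrt (∑ i, q i ^ 2) := by
    rw [← Real.sqrt_mul (Nat.cast_nonneg N)]
    refine Real.le_sqrt_of_sq_le ?_
    simpa using sq_sum_le_card_mul_sum_sq (s := Finset.univ) (f := q)
  have hF0 : ∀ t, ‖∑ i, q i • f i t (p i • (0 : EuclideanSpace ℝ (Fin n)))‖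
      ≤ Real.sqrt N * Real.sqrt (∑ i, q i ^ 2) * M 0 := by
    intro t
    refine (norm_sum_le _ _).trans (le_trans ?_ (mul_le_mul_of_nonneg_right hsum hM0))
    rw [Finset.sum_mul]
    refine Finset.sum_le_sum fun i _ => ?_
    rw [norm_smul, Real.norm_of_nonneg (hq i).le]
    refine mul_le_mul_of_nonneg_left ?_ (hq i).le
    simpa using hfb i t (p i • 0)
  set D := Real.sqrt N * Real.sqrt (∑ i, q i ^ 2) * M 0 with hD
  have hstep : ∀ t, ‖h (s (t + 1))‖ ≤ Real.sqrt γ * ‖h (s t)‖ + ‖h‖ * D := by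
    intro t
    have h1 := contraction_of_fderiv h g hg gh _ _ (hJ t) (Real.sqrt γ) hr
      (fun y w => norm_mul_le_of_contr H (J t y) hHsymm γ hγ.1.le (hcontr t y) w) (s t) 0
    have h2 := (h.le_opNorm _).trans (mul_le_mul_of_nonneg_left (hF0 t) (norm_nonneg h))
    rw [map_zero, sub_zero] at h1
    rw [hs t]
    have h3 := norm_le_norm_sub_add (h (∑ i, q i • f i t (p i • s t)))
      (h (∑ i, q i • f i t (p i • (0 : EuclideanSpace ℝ (Fin n)))))
    linarith
  have hrec := recursion_bound (fun t => ‖h (s t)‖) (Real.sqrt γ) (‖h‖ * D) hr hr1 hstep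
  set B := ‖h‖ * D / (1 - Real.sqrt γ) with hB
  have htend : Filter.Tendsto
      (fun t : ℤ => ‖g‖ * (Real.sqrt γ ^ t.toNat * (‖h (s 0)‖ - B) + B)) Filter.atTop
      (nhds (‖g‖ * (0 * (‖h (s 0)‖ - B) + B))) := by
    have hnat : Filter.Tendsto Int.toNat Filter.atTop Filter.atTop :=
      Filter.tendsto_atTop.2 fun b => by
        filter_upwards [Filter.eventually_ge_atTop (b : ℤ)] with t ht
        omega
    exact ((((tendsto_pow_atTop_nhds_zero_of_lt_one hr hr1).comp hnat).mul_const _).add_const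
      _).const_mul _
  have hle : (fun t : ℤ => ‖s t‖) ≤ᶠ[Filter.atTop]
      fun t : ℤ => ‖g‖ * (Real.sqrt γ ^ t.toNat * (‖h (s 0)‖ - B) + B) := by
    filter_upwards [Filter.eventually_ge_atTop (0 : ℤ)] with t ht
    have h1 := hrec t.toNat
    rw [Int.toNat_of_nonneg ht] at h1
    have h2 := g.le_opNorm (h (s t))
    rw [gh] at h2
    exact h2.trans (mul_le_mul_of_nonneg_left h1 (norm_nonneg g))
  have hcob : Filter.IsCoboundedUnder (· ≤ ·) Filter.atTop (fun t : ℤ => ‖s t‖) :=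
    (Filter.isBoundedUnder_of ⟨0, fun t => norm_nonneg (s t)⟩ :
      Filter.IsBoundedUnder (· ≥ ·) Filter.atTop (fun t : ℤ => ‖s t‖)).isCoboundedUnder_le
  refine (Filter.limsup_le_limsup hle hcob htend.isBoundedUnder_le).trans ?_
  rw [htend.limsup_eq]
  refine le_of_eq ?_
  rw [hB, hD]
  ring
end

section
/- Let g : ℝⁿ → ℝⁿ be continuously differentiable and let H ∈ ℝ^{n×n} be symmetric. Then for any s₁, s₂ ∈ ℝⁿ there exists a point s̃ on the line segment connecting s₁ and s₂ such that (g(s₂) − g(s₁))ᵀ H² (g(s₂) − g(s₁)) ≤ (s₂ − s₁)ᵀ Dg(s̃)ᵀ H² Dg(s̃) (s₂ − s₁), where Dg(s̃) is the Jacobian matrix of g at s̃. -/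
open scoped Matrix RealInnerProductSpace

/-!
With `v = g s₂ - g s₁` and `d = s₂ - s₁`, symmetry of `H` turns the two sides into `‖H v‖²` and
`‖H J(s̃) d‖²`. The scalar mean value theorem applied to `t ↦ ⟪H v, H g(t s₂ + (1 - t) s₁)⟫` on
`[0, 1]` gives `c` with `‖H v‖² = ⟪H v, H J(s̃) d⟫`, and Cauchy–Schwarz yields `‖H v‖ ≤ ‖H J(s̃) d‖`.
-/

lemma inner_toEuclideanLin_transpose_mul_self {n : ℕ} (M : Matrix (Fin n) (Fin n) ℝ)
    (x : EuclideanSpace ℝ (Fin n)) :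
    ⟪x, Matrix.toEuclideanLin (Mᵀ * M) x⟫ = ‖Matrix.toEuclideanCLM (𝕜 := ℝ) M x‖ ^ 2 := by
  have h : Matrix.toEuclideanLin (Mᵀ * M) x
      = Matrix.toEuclideanCLM (𝕜 := ℝ) (star M * M) x := rfl
  rw [h, map_mul, map_star, ContinuousLinearMap.star_eq_adjoint, mul_apply_eq_comp,
    ContinuousLinearMap.adjoint_inner_right, real_inner_self_eq_norm_sq]

/-- **Quadratic mean-value inequality (claim (A.1) in the proof of Lemma 4).**
For continuously differentiable `g` with Jacobian matrix `J` and symmetric `H`,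
given `s₁, s₂` there is a point `s̃` on the segment joining them such that
`(g(s₂) − g(s₁))ᵀ H² (g(s₂) − g(s₁)) ≤ (s₂ − s₁)ᵀ J(s̃)ᵀ H² J(s̃) (s₂ − s₁)`. -/
theorem stmt9 {n : ℕ}
    (g : EuclideanSpace ℝ (Fin n) → EuclideanSpace ℝ (Fin n))
    (hg : ContDiff ℝ 1 g)
    (J : EuclideanSpace ℝ (Fin n) → Matrix (Fin n) (Fin n) ℝ)
    (hJ : ∀ y, HasFDerivAt g (Matrix.toEuclideanCLM (𝕜 := ℝ) (J y)) y)
    (H : Matrix (Fin n) (Fin n) ℝ) (hHsymm : H.IsSymm)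
    (s₁ s₂ : EuclideanSpace ℝ (Fin n)) :
    ∃ c ∈ Set.Icc (0 : ℝ) 1,
      ⟪g s₂ - g s₁, Matrix.toEuclideanLin (H * H) (g s₂ - g s₁)⟫
        ≤ ⟪s₂ - s₁,
            Matrix.toEuclideanLin
              ((J (c • s₂ + (1 - c) • s₁))ᵀ * (H * H) * (J (c • s₂ + (1 - c) • s₁)))
              (s₂ - s₁)⟫ := by
  set A := Matrix.toEuclideanCLM (𝕜 := ℝ) H with hA
  set v := g s₂ - g s₁ with hv
  have hderiv : ∀ t : ℝ, HasDerivAt (fun t : ℝ => ⟪A v, A (g (t • s₂ + (1 - t) • s₁))⟫)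
      ⟪A v, A (Matrix.toEuclideanCLM (𝕜 := ℝ) (J (t • s₂ + (1 - t) • s₁)) (s₂ - s₁))⟫ t := by
    intro t
    have hline : HasDerivAt (fun t : ℝ => t • s₂ + (1 - t) • s₁) (s₂ - s₁) t := by
      have h := ((hasDerivAt_id t).smul_const s₂).add
        (((hasDerivAt_id t).const_sub 1).smul_const s₁)
      have hd : (1 : ℝ) • s₂ + (-1 : ℝ) • s₁ = s₂ - s₁ := by
        rw [one_smul, neg_one_smul, sub_eq_add_neg]
      rw [← hd]
      exact h
    have hcomp := (hJ (t • s₂ + (1 - t) • s₁)).comp_hasDerivAt t hline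
    exact ((innerSL ℝ (A v)).comp A).hasFDerivAt.comp_hasDerivAt t hcomp
  obtain ⟨c, hc, hslope⟩ := exists_hasDerivAt_eq_slope _ _ (zero_lt_one' ℝ)
    (fun t _ => (hderiv t).continuousAt.continuousWithinAt) (fun t _ => hderiv t)
  refine ⟨c, Set.Ioo_subset_Icc_self hc, ?_⟩
  set Jc := J (c • s₂ + (1 - c) • s₁)
  have hHH : H * H = Hᵀ * H := by rw [hHsymm.eq]
  have hJH : Jcᵀ * (H * H) * Jc = (H * Jc)ᵀ * (H * Jc) := by
    rw [hHH, Matrix.transpose_mul]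
    simp only [Matrix.mul_assoc]
  rw [hJH, hHH, inner_toEuclideanLin_transpose_mul_self, inner_toEuclideanLin_transpose_mul_self,
    map_mul, mul_apply_eq_comp, ← hA]
  have hsq : ‖A v‖ ^ 2 = ⟪A v, A (Matrix.toEuclideanCLM (𝕜 := ℝ) Jc (s₂ - s₁))⟫ := by
    rw [hslope]
    simp [← inner_sub_right, ← map_sub, ← hv]
  have hcs := real_inner_le_norm (A v) (A (Matrix.toEuclideanCLM (𝕜 := ℝ) Jc (s₂ - s₁)))
  -- From `a² ≤ a b` one gets `a² ≤ b²` without dividing by `a`, since `(a - b)² ≥ 0`.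
  nlinarith [sq_nonneg (‖A v‖ - ‖A (Matrix.toEuclideanCLM (𝕜 := ℝ) Jc (s₂ - s₁))‖)]
end
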